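/- There exists a finite simple graph G such that every strongly connected orientation D of G satisfies c(D) < c(G). (The Petersen graph is such a graph: c(G) = 3 while every strongly connected orientation has cop number 2.) -/

import Mathlib

open Classical

universe u

namespace CopsRobbers

variable {V : Type u}

/-- `CatchIn A k t c r` holds when, in the cops-and-robbers game on the digraph
with arc relation `A`, with the `k` cops currently at positions `c`, the robber
currently at `r`, and the cops to move, the cops can guarantee that some cop
occupies the robber's vertex within `t` further rounds (in each round every cop
either stays or moves along an out-arc, then the robber either stays or moves
along an out-arc; capture may occur right after the cops' move or after the
robber's move). -/
inductive CatchIn (A : V → V → Prop) (k : ℕ) : ℕ → (Fin k → V) → V → Prop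
  | caught {t : ℕ} {c : Fin k → V} {r : V} (h : ∃ i, c i = r) : CatchIn A k t c r
  | stepCatch {t : ℕ} {c : Fin k → V} {r : V} (c' : Fin k → V)
      (hc : ∀ i, c' i = c i ∨ A (c i) (c' i)) (h : ∃ i, c' i = r) :
      CatchIn A k (t + 1) c r
  | step {t : ℕ} {c : Fin k → V} {r : V} (c' : Fin k → V)
      (hc : ∀ i, c' i = c i ∨ A (c i) (c' i))
      (h : ∀ r' : V, r' = r ∨ A r r' → CatchIn A k t c' r') :
      CatchIn A k (t + 1) c r

/-- `k` cops can choose initial positions guaranteeing capture within `t` rounds,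
no matter which starting vertex the robber then chooses. -/
def CopsWinIn (A : V → V → Prop) (k t : ℕ) : Prop :=
  ∃ c : Fin k → V, ∀ r : V, CatchIn A k t c r

/-- `k` cops have a winning strategy on the digraph with arc relation `A`. -/
def CopsWin (A : V → V → Prop) (k : ℕ) : Prop := ∃ t, CopsWinIn A k t

/-- The cop number of a digraph: the least `k` such that `k` cops have a winning
strategy. -/
noncomputable def copNumber (A : V → V → Prop) : ℕ := sInf {k | CopsWin A k}

/-- The capture time of a digraph: the least `t` such that `copNumber A` cops
can guarantee capture within `t` rounds. -/
noncomputable def captureTime (A : V → V → Prop) : ℕ :=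
  sInf {t | CopsWinIn A (copNumber A) t}

/-- `A` is an orientation of the simple graph `G`: each edge of `G` is given
exactly one direction, and there are no other arcs. -/
def IsOrientation (G : SimpleGraph V) (A : V → V → Prop) : Prop :=
  (∀ u v, G.Adj u v ↔ (A u v ∨ A v u)) ∧ ∀ u v, A u v → ¬ A v u

/-- An oriented graph: a digraph with no loops and no pair of opposite arcs. -/
def IsOriented (A : V → V → Prop) : Prop := ∀ u v, A u v → ¬ A v u

/-- A digraph is strongly connected if every vertex is reachable from every
other by a directed path. -/
def StronglyConnected (A : V → V → Prop) : Prop :=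
  ∀ u v : V, Relation.ReflTransGen A u v

/-!
On a strongly connected digraph, two cops win as soon as there is a vertex `x` such that deleting
its closed out-neighbourhood leaves an acyclic digraph: one cop guards `x`, the other one chases the
robber, who can move only finitely often. Three cops are needed on the Petersen graph, which has
girth 5 and minimum degree 3 (Aigner and Fromme).

To find `x` in a strongly connected orientation of the Petersen graph, let `C` be a directed cycle
of length 5 if there is one, and otherwise of length 6. Strong connectedness provides an arc leaving
`C` next to one entering `C`, at consecutive vertices of `C`. As the Petersen graph is
3-arc-transitive, `C` and these two arcs may be put in a standard position, where `x` is easily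
found. If `C` does not exist, any `x` with two out-neighbours `y` and `z` will do: a directed cycle
avoiding `x`, `y` and `z` would have length 7, and the Petersen graph contains no 7-cycle.
-/

section Game

variable {A : V → V → Prop} {k : ℕ}

lemma CatchIn.mono {t t' : ℕ} {c : Fin k → V} {r : V} (h : CatchIn A k t c r) (ht : t ≤ t') :
    CatchIn A k t' c r := by
  induction h generalizing t' with
  | caught h => exact .caught h
  | stepCatch c' hc h =>
    obtain ⟨s, rfl⟩ := Nat.exists_eq_add_of_le' (Nat.le_of_add_left_le ht)
    exact .stepCatch c' hc h
  | step c' hc _ ih =>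
    obtain ⟨s, rfl⟩ := Nat.exists_eq_add_of_le' (Nat.le_of_add_left_le ht)
    exact .step c' hc fun r' hr => ih r' hr (by omega)

lemma exists_forall_catchIn [Finite V] {c : Fin k → V} {p : V → Prop}
    (h : ∀ r, p r → ∃ t, CatchIn A k t c r) : ∃ t, ∀ r, p r → CatchIn A k t c r := by
  choose! t ht using h
  obtain ⟨T, hT⟩ := Finite.exists_le t
  exact ⟨T, fun r hr => (ht r hr).mono (hT r)⟩

lemma catchIn_one_of_arc {c : Fin k → V} {r : V} {i : Fin k} (h : A (c i) r) :
    CatchIn A k 1 c r := by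
  refine .stepCatch (Function.update c i r) (fun j => ?_) ⟨i, Function.update_self ..⟩
  rcases eq_or_ne j i with rfl | hj
  · exact .inr (by rwa [Function.update_self])
  · exact .inl (Function.update_of_ne hj ..)

lemma copsWin_card [Fintype V] : CopsWin A (Fintype.card V) :=
  ⟨0, (Fintype.equivFin V).symm, fun r => .caught ((Fintype.equivFin V).symm.surjective r)⟩

lemma copNumber_le (h : CopsWin A k) : copNumber A ≤ k := Nat.sInf_le h

/-- Cops standing on the vertices of `S` confine the robber: outside the closed out-neighbourhood
of `S`, where it would be captured at once, it cannot run forever. On a finite digraph this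
says that deleting that neighbourhood leaves an acyclic digraph. -/
def Confines (A : V → V → Prop) (S : Set V) : Prop :=
  WellFounded fun v u => A u v ∧ ∀ x ∈ S, v ≠ x ∧ ¬A x v

/-- The guards stay put while one more cop chases the robber: whenever the robber waits, the chaser
gets closer, and the robber can move only finitely often. -/
lemma Confines.copsWin [Finite V] [Nonempty V] {x : Fin k → V} (h : Confines A (Set.range x))
    (hconn : StronglyConnected A) : CopsWin A (k + 1) := by
  have chase (r c : V) : ∃ t, CatchIn A (k + 1) t (Fin.cons c x) r := by
    induction r using h.induction generalizing c with
    | _ r ih =>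
    induction hconn c r using Relation.ReflTransGen.head_induction_on with
    | refl => exact ⟨0, .caught ⟨0, rfl⟩⟩
    | @head c b hcb _ hb =>
      have respond (r' : V) (hr' : r' = r ∨ A r r') :
          ∃ t, CatchIn A (k + 1) t (Fin.cons b x) r' := by
        rcases hr' with rfl | hr'
        · exact hb
        by_cases hsafe : ∀ y ∈ Set.range x, r' ≠ y ∧ ¬A y r'
        · exact ih r' ⟨hr', hsafe⟩ b
        · simp only [Set.forall_mem_range, not_forall, not_and_or, not_not] at hsafe
          obtain ⟨i, rfl | hi⟩ := hsafe
          · exact ⟨0, .caught ⟨i.succ, rfl⟩⟩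
          · exact ⟨1, catchIn_one_of_arc (i := i.succ) hi⟩
      obtain ⟨t, ht⟩ := exists_forall_catchIn respond
      exact ⟨t + 1, .step _ (Fin.cases (.inr hcb) fun i => .inl rfl) ht⟩
  inhabit V
  obtain ⟨t, ht⟩ := exists_forall_catchIn (p := fun _ => True) fun r _ => chase r default
  exact ⟨t, Fin.cons default x, fun r => ht r trivial⟩

lemma Confines.of_forall_mem {S : Set V}
    (h : ∀ C : Set V, S ⊆ C → (∀ x ∈ S, ∀ v, A x v → v ∈ C) →
      (∀ u, (∀ v, A u v → v ∈ C) → u ∈ C) → ∀ u, u ∈ C) : Confines A S := by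
  let Escape (v u : V) : Prop := A u v ∧ ∀ x ∈ S, v ≠ x ∧ ¬A x v
  have hacc := h {u | (∀ x ∈ S, u ≠ x ∧ ¬A x u) → Acc Escape u}
    (fun x hx hsafe => absurd rfl (hsafe x hx).1) (fun x hx v hv hsafe => absurd hv (hsafe x hx).2)
    fun u hu _ => ⟨u, fun v hv => hu v hv.1 hv.2⟩
  exact ⟨fun u => ⟨u, fun v hv => hacc v hv.2⟩⟩

end Game

section AignerFromme

variable {G : SimpleGraph V} {k : ℕ} {c : Fin k → V} {r : V}

/-- Since `G` has neither triangles nor 4-cycles, a cop not at `r` threatens at most one neighbour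
of `r`. -/
lemma exists_adj_forall_not_threatened [G.LocallyFinite]
    (htri : ∀ u v, G.Adj u v → G.commonNeighbors u v = ∅)
    (hquad : Pairwise fun u v => (G.commonNeighbors u v).Subsingleton)
    (hk : k < G.degree r) (hc : ∀ i, c i ≠ r) :
    ∃ r', G.Adj r r' ∧ ∀ i, c i ≠ r' ∧ ¬G.Adj (c i) r' := by
  by_contra! hthreat
  choose cop hcop using hthreat
  obtain ⟨⟨u, hu⟩, ⟨v, hv⟩, huv, heq⟩ := Fintype.exists_ne_map_eq_of_card_lt
    (fun v : G.neighborSet r => cop v v.2) (by rwa [Fintype.card_fin, G.card_neighborSet_eq_degree])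
  rw [ne_eq, Subtype.mk.injEq] at huv
  have hcu := hcop u hu
  have hcv := hcop v hv
  simp only at heq
  rw [← heq] at hcv
  have no_triangle {a b : V} (hra : G.Adj r a) (hrb : G.Adj r b) : ¬G.Adj a b := fun hab =>
    (htri r a hra).le ⟨hrb, hab⟩
  by_cases h₁ : c (cop u hu) = u
  · rw [h₁] at hcv
    exact no_triangle hu hv (hcv huv)
  by_cases h₂ : c (cop u hu) = v
  · rw [h₂] at hcu
    exact no_triangle hv hu (hcu (Ne.symm huv))
  exact huv (hquad (hc _) ⟨hcu h₁, hu⟩ ⟨hcv h₂, hv⟩)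

lemma not_catchIn_of_not_threatened [G.LocallyFinite]
    (htri : ∀ u v, G.Adj u v → G.commonNeighbors u v = ∅)
    (hquad : Pairwise fun u v => (G.commonNeighbors u v).Subsingleton)
    (hdeg : ∀ v, k < G.degree v) {t : ℕ} (hsafe : ∀ i, c i ≠ r ∧ ¬G.Adj (c i) r) :
    ¬CatchIn G.Adj k t c r := by
  have hfree {c c' : Fin k → V} {r : V} (hsafe : ∀ i, c i ≠ r ∧ ¬G.Adj (c i) r)
      (hmove : ∀ i, c' i = c i ∨ G.Adj (c i) (c' i)) (i : Fin k) : c' i ≠ r := by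
    rintro rfl
    exact (hmove i).elim (fun h => (hsafe i).1 h.symm) (hsafe i).2
  intro h
  induction h with
  | caught h => exact h.elim fun i hi => (hsafe i).1 hi
  | stepCatch c' hmove h => exact h.elim (hfree hsafe hmove)
  | step c' hmove _ ih =>
    obtain ⟨r', hr, hsafe'⟩ :=
      exists_adj_forall_not_threatened htri hquad (hdeg _) (hfree hsafe hmove)
    exact ih r' (.inr hr) hsafe'

/-- The bound of Aigner and Fromme for graphs of girth at least five. -/
lemma le_copNumber_of_forall_le_degree [Fintype V] [DecidableRel G.Adj] [Nonempty V] {d : ℕ}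
    (htri : ∀ u v, G.Adj u v → G.commonNeighbors u v = ∅)
    (hquad : Pairwise fun u v => (G.commonNeighbors u v).Subsingleton)
    (hdeg : ∀ v, d ≤ G.degree v) : d ≤ copNumber G.Adj := by
  refine le_csInf ⟨_, copsWin_card⟩ ?_
  rintro k ⟨t, c, hc⟩
  by_contra! hk
  obtain ⟨r, hr⟩ : ∃ r, ∀ i, c i ≠ r := by
    by_contra! hsurj
    have hcard := Fintype.card_le_of_surjective c hsurj
    have := G.degree_lt_card_verts (Classical.arbitrary V)
    have := hdeg (Classical.arbitrary V)
    rw [Fintype.card_fin] at hcard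
    omega
  obtain ⟨r', -, hsafe⟩ :=
    exists_adj_forall_not_threatened htri hquad (hk.trans_le (hdeg r)) hr
  exact not_catchIn_of_not_threatened htri hquad (fun v => hk.trans_le (hdeg v)) hsafe (hc r')

end AignerFromme

section Digraph

variable {G : SimpleGraph V} {A : V → V → Prop} {n : ℕ}

lemma IsOrientation.adj (hA : IsOrientation G A) {u v : V} (huv : A u v) : G.Adj u v :=
  (hA.1 u v).2 (.inl huv)

lemma IsOrientation.ne_of_arc_arc (hA : IsOrientation G A) {u v w : V}
    (huv : A u v) (hvw : A v w) : u ≠ w := by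
  rintro rfl
  exact hA.2 _ _ huv hvw

lemma IsOrientation.confines_singleton (hA : IsOrientation G A) {x : V}
    (h : ∀ C : Set V, x ∈ C → (∀ v, A x v → v ∈ C) →
      (∀ u, (∀ v, G.Adj u v → ¬A v u → v ∈ C) → u ∈ C) → ∀ u, u ∈ C) :
    Confines A {x} := by
  refine .of_forall_mem fun C hx hout hstep => h C (hx rfl) (hout x rfl) fun u hu =>
    hstep u fun v huv => hu v (hA.adj huv) (hA.2 u v huv)

lemma StronglyConnected.exists_arc_leaving (h : StronglyConnected A) {s : Set V}
    (hs : s.Nonempty) (hs' : sᶜ.Nonempty) : ∃ u ∈ s, ∃ v ∉ s, A u v := by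
  obtain ⟨a, ha⟩ := hs
  obtain ⟨b, hb⟩ := hs'
  by_contra! hclosed
  have hreach {v : V} (hv : Relation.ReflTransGen A a v) : v ∈ s := by
    induction hv with
    | refl => exact ha
    | tail _ huv hu => exact by_contra fun hv => hclosed _ hu _ hv huv
  exact hb (hreach (h a b))

lemma StronglyConnected.exists_out [Nontrivial V] (h : StronglyConnected A) (u : V) :
    ∃ v, A u v := by
  obtain ⟨v, hv⟩ := exists_ne u
  exact (h u v).cases_head.elim (fun huv => absurd huv.symm hv) fun ⟨w, huw, _⟩ => ⟨w, huw⟩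

lemma StronglyConnected.exists_in [Nontrivial V] (h : StronglyConnected A) (u : V) :
    ∃ v, A v u := by
  obtain ⟨v, hv⟩ := exists_ne u
  exact (h v u).cases_tail.elim (fun huv => absurd huv.symm hv) fun ⟨w, _, hwu⟩ => ⟨w, hwu⟩

/-- The vertices `c 0, …, c n` in this order form a directed closed walk of length `n + 1`. -/
def IsClosedWalk (A : V → V → Prop) (c : Fin (n + 1) → V) : Prop :=
  ∀ i, A (c i) (c (i + 1))

lemma IsClosedWalk.rotate {c : Fin (n + 1) → V} (hc : IsClosedWalk A c) (i : Fin (n + 1)) :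
    IsClosedWalk A fun j => c (i + j) := fun j => by
  simpa only [add_assoc] using hc (i + j)

lemma forall_of_add_one {p : Fin (n + 1) → Prop} {i : Fin (n + 1)} (hi : p i)
    (hstep : ∀ j, p j → p (j + 1)) (j : Fin (n + 1)) : p j := by
  have hadd (k : Fin (n + 1)) : p (i + k) := by
    induction k using Fin.induction with
    | zero => rwa [add_zero]
    | succ k hk =>
      rw [← Fin.coeSucc_eq_succ, ← add_assoc]
      exact hstep _ hk
  simpa only [add_sub_cancel] using hadd (j - i)

lemma IsClosedWalk.stronglyConnected {c : Fin (n + 1) → V} (hc : IsClosedWalk A c)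
    (hsurj : Function.Surjective c) : StronglyConnected A := by
  refine hsurj.forall₂.2 fun i => ?_
  exact forall_of_add_one (p := fun j => Relation.ReflTransGen A (c i) (c j)) .refl
    fun j hj => hj.tail (hc j)

lemma IsClosedWalk.four_le (hA : IsOrientation G A)
    (htri : ∀ u v, G.Adj u v → G.commonNeighbors u v = ∅)
    (hquad : Pairwise fun u v => (G.commonNeighbors u v).Subsingleton)
    {c : Fin (n + 1) → V} (hc : IsClosedWalk A c) : 4 ≤ n := by
  by_contra! hn
  interval_cases n
  · exact hA.ne_of_arc_arc (hc 0) (hc 0) rfl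
  · exact hA.ne_of_arc_arc (hc 0) (hc 1) rfl
  · exact (htri _ _ (hA.adj (hc 0))).le ⟨(hA.adj (hc 2)).symm, hA.adj (hc 1)⟩
  · exact hA.ne_of_arc_arc (hc 1) (hc 2) <| hquad (hA.ne_of_arc_arc (hc 0) (hc 1))
      ⟨hA.adj (hc 0), (hA.adj (hc 1)).symm⟩ ⟨(hA.adj (hc 3)).symm, hA.adj (hc 2)⟩

lemma exists_isClosedWalk_of_not_wellFounded {s : Finset V} (hs : ∀ u v, A u v → v ∈ s)
    (h : ¬WellFounded (Function.swap A)) :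
    ∃ n < s.card, ∃ c : Fin (n + 1) → V, IsClosedWalk A c := by
  rw [wellFounded_iff_isEmpty_descending_chain, not_isEmpty_iff] at h
  obtain ⟨f, hf⟩ := h
  obtain ⟨i, j, hj, hij, heq⟩ : ∃ i, ∃ j ≤ s.card, i < j ∧ f (i + 1) = f (j + 1) := by
    obtain ⟨i, hi, j, hj, hij, heq⟩ := Finset.exists_ne_map_eq_of_card_lt_of_maps_to
      (s := Finset.range (s.card + 1)) (t := s) (by simp) (f := fun i => f (i + 1))
      fun i _ => hs _ _ (hf i)
    rw [Finset.mem_range, Nat.lt_succ_iff] at hi hj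
    rcases hij.lt_or_gt with hij | hij
    exacts [⟨i, j, hj, hij, heq⟩, ⟨j, i, hi, hij, heq.symm⟩]
  refine ⟨j - i - 1, by omega, fun k => f (i + 1 + k), fun k => ?_⟩
  dsimp only
  rw [Fin.val_add_one]
  split_ifs with hk
  · have hlast : i + 1 + (k : ℕ) = j := by rw [hk, Fin.val_last]; omega
    rw [hlast, add_zero, heq]
    exact hf j
  · exact hf (i + 1 + k)

lemma IsOrientation.exists_isClosedWalk_of_not_confines [Fintype V] (hA : IsOrientation G A)
    {x y z : V} (hxy : A x y) (hxz : A x z) (hyz : y ≠ z) (hx : ¬Confines A {x}) :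
    ∃ n < Fintype.card V - 3, ∃ c : Fin (n + 1) → V, IsClosedWalk A c := by
  have hcard : ({x, y, z}ᶜ : Finset V).card = Fintype.card V - 3 := by
    rw [Finset.card_compl, Finset.card_eq_three.2
      ⟨x, y, z, (hA.adj hxy).ne, (hA.adj hxz).ne, hyz, rfl⟩]
  obtain ⟨n, hn, c, hc⟩ := exists_isClosedWalk_of_not_wellFounded (s := {x, y, z}ᶜ)
    (fun u v ⟨_, hv⟩ => by
      simp only [Finset.mem_compl, Finset.mem_insert, Finset.mem_singleton, not_or]
      refine ⟨(hv x rfl).1, ?_, ?_⟩ <;> rintro rfl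
      exacts [(hv x rfl).2 hxy, (hv x rfl).2 hxz]) hx
  exact ⟨n, hcard ▸ hn, c, fun i => (hc i).1⟩

/-- The walk `c` can be left at its `i`-th vertex by an arc other than the next one of `c`. -/
def HasExit (A : V → V → Prop) (c : Fin (n + 1) → V) (i : Fin (n + 1)) : Prop :=
  ∃ v, A (c i) v ∧ v ≠ c (i + 1)

lemma hasExit_rotate_iff {c : Fin (n + 1) → V} {i j : Fin (n + 1)} :
    HasExit A (fun k => c (i + k)) j ↔ HasExit A c (i + j) := by
  simp only [HasExit, add_assoc]

lemma exists_hasExit (h : StronglyConnected A) {c : Fin (n + 1) → V}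
    (hsurj : ¬Function.Surjective c) : ∃ i, HasExit A c i := by
  rw [← Set.range_eq_univ, ← ne_eq, ← Set.nonempty_compl] at hsurj
  obtain ⟨_, ⟨i, rfl⟩, v, hv, hiv⟩ := h.exists_arc_leaving (Set.range_nonempty c) hsurj
  exact ⟨i, v, hiv, fun h => hv ⟨_, h.symm⟩⟩

/-- Where an arc enters the walk from outside, degree three leaves no room for an exit. -/
lemma exists_not_hasExit [G.LocallyFinite] (hA : IsOrientation G A)
    (hdeg : ∀ v, G.degree v ≤ 3) (h : StronglyConnected A) {c : Fin (n + 1) → V}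
    (hc : IsClosedWalk A c) (hsurj : ¬Function.Surjective c) : ∃ i, ¬HasExit A c i := by
  rw [← Set.range_eq_univ, ← ne_eq, ← Set.nonempty_compl] at hsurj
  obtain ⟨u, hu, _, hi, hui⟩ := h.exists_arc_leaving hsurj (by simpa using Set.range_nonempty c)
  rw [Set.notMem_compl_iff] at hi
  obtain ⟨i, rfl⟩ := hi
  refine ⟨i, fun ⟨v, hiv, hv⟩ => (hdeg (c i)).not_gt ?_⟩
  have hprev : A (c (i - 1)) (c i) := by simpa using hc (i - 1)
  have hsub : {u, c (i - 1), c (i + 1), v} ⊆ G.neighborFinset (c i) := by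
    simp [Finset.insert_subset_iff, hA.1, hui, hprev, hc i, hiv]
  have hu' : u ≠ c (i - 1) := fun h => hu ⟨_, h.symm⟩
  calc 3 < ({u, c (i - 1), c (i + 1), v} : Finset V).card := by
        simp [hu', hA.ne_of_arc_arc hui (hc i), hA.ne_of_arc_arc hui hiv,
          hA.ne_of_arc_arc hprev (hc i), hA.ne_of_arc_arc hprev hiv, hv.symm]
    _ ≤ G.degree (c i) := Finset.card_le_card hsub

lemma exists_and_not_add_one {p : Fin (n + 1) → Prop} {i j : Fin (n + 1)} (hi : p i) (hj : ¬p j) :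
    ∃ l, p l ∧ ¬p (l + 1) := by
  by_contra! hstep
  exact hj (forall_of_add_one hi hstep j)

lemma IsOrientation.exists_two_out [Fintype V] [Fintype G.edgeSet]
    (hA : IsOrientation G A) (hcard : Fintype.card V < G.edgeFinset.card) :
    ∃ u v w, v ≠ w ∧ A u v ∧ A u w := by
  have harc (e : G.edgeSet) : ∃ a : V × V, s(a.1, a.2) = e.1 ∧ A a.1 a.2 := by
    obtain ⟨⟨u, v⟩, huv⟩ := e
    exact ((hA.1 u v).1 huv).elim (fun h => ⟨(u, v), rfl, h⟩) fun h => ⟨(v, u), Sym2.eq_swap, h⟩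
  choose arc harc hA' using harc
  obtain ⟨e, e', hne, heq⟩ := Fintype.exists_ne_map_eq_of_card_lt (fun e => (arc e).1)
    (by rwa [← G.edgeFinset_card])
  refine ⟨(arc e).1, (arc e).2, (arc e').2, fun h => hne (Subtype.ext ?_), hA' e, ?_⟩
  · rw [← harc, ← harc, Prod.ext heq h]
  · exact heq ▸ hA' e'

section Preimage

variable {W : Type*} {H : SimpleGraph W}

lemma IsOrientation.preimage (hA : IsOrientation G A) (f : H ≃g G) : IsOrientation H (f ⁻¹'o A) :=
  ⟨fun _ _ => f.map_adj_iff.symm.trans (hA.1 _ _), fun _ _ => hA.2 _ _⟩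

lemma StronglyConnected.preimage (h : StronglyConnected A) (f : W ≃ V) :
    StronglyConnected (f ⁻¹'o A) := fun u v => by
  have hlift := (h (f u) (f v)).lift (p := f ⁻¹'o A) f.symm fun a b hab => by
    simpa [Order.Preimage, Function.onFun] using hab
  simpa [Function.onFun] using hlift

lemma IsClosedWalk.preimage {c : Fin (n + 1) → V} (hc : IsClosedWalk A c) (f : W ≃ V) :
    IsClosedWalk (f ⁻¹'o A) (f.symm ∘ c) := fun i => by
  simpa [Order.Preimage] using hc i

lemma Confines.of_preimage {f : W ≃ V} {S : Set W} (h : Confines (f ⁻¹'o A) S) :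
    Confines A (f '' S) := by
  refine (f.surjective.wellFounded_iff fun {u v} => ?_).1 h
  simp only [Order.Preimage, Set.forall_mem_image, f.injective.ne_iff]

lemma hasExit_preimage_iff {c : Fin (n + 1) → V} {i : Fin (n + 1)} {f : W ≃ V} :
    HasExit (f ⁻¹'o A) (f.symm ∘ c) i ↔ HasExit A c i := by
  simp [HasExit, ← f.exists_congr_right, f.eq_symm_apply]

end Preimage

end Digraph

section Petersen

/-- The neighbours of a vertex of the Petersen graph. -/
def petersenNeighbors : Fin 10 → List (Fin 10) :=
  ![[1, 4, 5], [0, 2, 6], [1, 3, 7], [2, 4, 8], [0, 3, 9],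
    [0, 7, 8], [1, 8, 9], [2, 5, 9], [3, 5, 6], [4, 6, 7]]

/-- The Petersen graph, drawn as the outer cycle `0, 1, 2, 3, 4`, the inner cycle `5, 7, 9, 6, 8`
and the spokes `{i, i + 5}`. -/
def petersen : SimpleGraph (Fin 10) where
  Adj u v := v ∈ petersenNeighbors u
  symm := ⟨by decide +kernel⟩
  loopless := ⟨by decide +kernel⟩

instance : DecidableRel petersen.Adj :=
  fun u v => inferInstanceAs (Decidable (v ∈ petersenNeighbors u))

lemma petersen_adj {u v : Fin 10} : petersen.Adj u v ↔ v ∈ petersenNeighbors u := Iff.rfl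

lemma petersen_degree : ∀ v, petersen.degree v = 3 := by decide +kernel

lemma petersen_card_edgeFinset : petersen.edgeFinset.card = 15 := by decide +kernel

lemma petersen_commonNeighbors_eq_empty :
    ∀ u v, petersen.Adj u v → petersen.commonNeighbors u v = ∅ := by
  have : ∀ u v, petersen.Adj u v → ∀ w, ¬(petersen.Adj u w ∧ petersen.Adj v w) := by
    decide +kernel
  exact fun u v huv => Set.eq_empty_of_forall_notMem (this u v huv)

lemma petersen_commonNeighbors_subsingleton :
    Pairwise fun u v => (petersen.commonNeighbors u v).Subsingleton := by
  have : ∀ u v, u ≠ v → ∀ a, petersen.Adj u a ∧ petersen.Adj v a →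
      ∀ b, petersen.Adj u b ∧ petersen.Adj v b → a = b := by
    decide +kernel
  exact fun u v huv a ha b hb => this u v huv a ha b hb

lemma three_le_copNumber_petersen : 3 ≤ copNumber petersen.Adj :=
  le_copNumber_of_forall_le_degree petersen_commonNeighbors_eq_empty
    petersen_commonNeighbors_subsingleton fun v => (petersen_degree v).ge

lemma exists_petersen_iso : ∀ a b c d, petersen.Adj a b → petersen.Adj b c → petersen.Adj c d →
    a ≠ c → b ≠ d → ∃ f : petersen ≃g petersen, f 0 = a ∧ f 1 = b ∧ f 2 = c ∧ f 3 = d := by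
  have extend : ∀ a b, petersen.Adj a b → ∀ c, petersen.Adj b c → a ≠ c →
      ∀ d, petersen.Adj c d → b ≠ d →
      ∃ e, petersen.Adj d e ∧ petersen.Adj e a ∧
      ∃ p, petersen.Adj a p ∧ p ≠ b ∧ p ≠ e ∧ ∃ q, petersen.Adj b q ∧ q ≠ a ∧ q ≠ c ∧
      ∃ r, petersen.Adj c r ∧ r ≠ b ∧ r ≠ d ∧ ∃ s, petersen.Adj d s ∧ s ≠ c ∧ s ≠ e ∧
      ∃ t, petersen.Adj e t ∧ t ≠ d ∧ t ≠ a ∧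
      Function.Bijective ![a, b, c, d, e, p, q, r, s, t] ∧
      ∀ u v, petersen.Adj (![a, b, c, d, e, p, q, r, s, t] u) (![a, b, c, d, e, p, q, r, s, t] v) ↔
        petersen.Adj u v := by
    decide +kernel
  intro a b c d hab hbc hcd hac hbd
  obtain ⟨e, -, -, p, -, -, -, q, -, -, -, r, -, -, -, s, -, -, -, t, -, -, -, hbij, hadj⟩ :=
    extend a b hab c hbc hac d hcd hbd
  exact ⟨⟨.ofBijective _ hbij, hadj _ _⟩, rfl, rfl, rfl, rfl⟩

/-- The non-backtracking conditions are interleaved so that `decide` prunes early. -/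
lemma petersen_no_seven_cycle : ∀ a b, petersen.Adj a b → ∀ c, petersen.Adj b c → c ≠ a →
    ∀ d, petersen.Adj c d → d ≠ b → ∀ e, petersen.Adj d e → e ≠ c →
    ∀ f, petersen.Adj e f → f ≠ d → f ≠ a → ∀ g, petersen.Adj f g → g ≠ e → g ≠ b →
    ¬petersen.Adj g a := by
  decide +kernel

end Petersen

section PetersenOrientation

variable {A : Fin 10 → Fin 10 → Prop}

lemma confines_three_of_pentagon (hA : IsOrientation petersen A)
    (h01 : A 0 1) (h12 : A 1 2) (h34 : A 3 4) (h40 : A 4 0) (h05 : A 0 5)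
    (h38 : A 3 8) (h86 : A 8 6) (h69 : A 6 9) (h97 : A 9 7) (h72 : A 7 2) : Confines A {3} := by
  refine hA.confines_singleton fun C c3 hout hstep => ?_
  have c4 := hout 4 h34
  have c8 := hout 8 h38
  have c2 : 2 ∈ C := hstep 2 (by simp [petersen_adj, petersenNeighbors, h12, c3, h72])
  obtain ⟨c5, c7⟩ : 5 ∈ C ∧ 7 ∈ C := by
    rcases (hA.1 5 7).1 (by decide) with h57 | h75
    · have c7 : 7 ∈ C := hstep 7 (by simp [petersen_adj, petersenNeighbors, c2, h57, h97])
      exact ⟨hstep 5 (by simp [petersen_adj, petersenNeighbors, h05, c7, c8]), c7⟩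
    · have c5 : 5 ∈ C := hstep 5 (by simp [petersen_adj, petersenNeighbors, h05, h75, c8])
      exact ⟨c5, hstep 7 (by simp [petersen_adj, petersenNeighbors, c2, c5, h97])⟩
  have c9 : 9 ∈ C := hstep 9 (by simp [petersen_adj, petersenNeighbors, c4, h69, c7])
  obtain ⟨c1, c6⟩ : 1 ∈ C ∧ 6 ∈ C := by
    rcases (hA.1 1 6).1 (by decide) with h16 | h61
    · have c6 : 6 ∈ C := hstep 6 (by simp [petersen_adj, petersenNeighbors, h16, h86, c9])
      exact ⟨hstep 1 (by simp [petersen_adj, petersenNeighbors, h01, c2, c6]), c6⟩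
    · have c1 : 1 ∈ C := hstep 1 (by simp [petersen_adj, petersenNeighbors, h01, c2, h61])
      exact ⟨c1, hstep 6 (by simp [petersen_adj, petersenNeighbors, c1, h86, c9])⟩
  have c0 : 0 ∈ C := hstep 0 (by simp [petersen_adj, petersenNeighbors, c1, h40, c5])
  simp [Fin.forall_fin_succ, *]

lemma confines_zero_of_pentagon (hA : IsOrientation petersen A)
    (h01 : A 0 1) (h12 : A 1 2) (h23 : A 2 3) (h34 : A 3 4) (h05 : A 0 5) (h94 : A 9 4)
    (hcycle : ¬(A 3 8 ∧ A 8 6 ∧ A 6 9 ∧ A 9 7 ∧ A 7 2)) : Confines A {0} := by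
  refine hA.confines_singleton fun C c0 hout hstep => ?_
  have c1 := hout 1 h01
  have c5 := hout 5 h05
  have c4 : 4 ∈ C := hstep 4 (by simp [petersen_adj, petersenNeighbors, c0, h34, h94])
  have step3 : (¬A 8 3 → 8 ∈ C) → 3 ∈ C := by
    simpa [petersen_adj, petersenNeighbors, h23, c4] using hstep 3
  have step2 : (¬A 3 2 → 3 ∈ C) → (¬A 7 2 → 7 ∈ C) → 2 ∈ C := by
    simpa [petersen_adj, petersenNeighbors, h12] using hstep 2
  have step9 : (¬A 6 9 → 6 ∈ C) → (¬A 7 9 → 7 ∈ C) → 9 ∈ C := by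
    simpa [petersen_adj, petersenNeighbors, c4] using hstep 9
  have step6 : (¬A 8 6 → 8 ∈ C) → (¬A 9 6 → 9 ∈ C) → 6 ∈ C := by
    simpa [petersen_adj, petersenNeighbors, c1] using hstep 6
  have step7 : (¬A 2 7 → 2 ∈ C) → (¬A 9 7 → 9 ∈ C) → 7 ∈ C := by
    simpa [petersen_adj, petersenNeighbors, c5] using hstep 7
  have step8 : (¬A 3 8 → 3 ∈ C) → (¬A 6 8 → 6 ∈ C) → 8 ∈ C := by
    simpa [petersen_adj, petersenNeighbors, c5] using hstep 8
  have h38 := (hA.1 3 8).1 (by decide)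
  have h86 := (hA.1 8 6).1 (by decide)
  have h69 := (hA.1 6 9).1 (by decide)
  have h97 := (hA.1 9 7).1 (by decide)
  have h72 := (hA.1 7 2).1 (by decide)
  -- The robber could only run from `3` along the cycle `3 → 8 → 6 → 9 → 7 → 2 → 3`.
  have c3 : 3 ∈ C := by grind
  -- What remains of the graph is the path `8 - 6 - 9 - 7 - 2`.
  have : 2 ∈ C ∧ 6 ∈ C ∧ 7 ∈ C ∧ 8 ∈ C ∧ 9 ∈ C := by grind
  simp [Fin.forall_fin_succ, *]

lemma arcs_of_hexagon (hA : IsOrientation petersen A) (hconn : StronglyConnected A)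
    (hfive : ∀ c : Fin 5 → Fin 10, ¬IsClosedWalk A c)
    (h01 : A 0 1) (h12 : A 1 2) (h23 : A 2 3) (h38 : A 3 8) (h85 : A 8 5) (h50 : A 5 0)
    (h04 : A 0 4) (h61 : A 6 1) : A 4 9 ∧ A 6 8 ∧ A 9 6 ∧ A 7 5 ∧ A 7 2 ∧ A 9 7 := by
  have no_pentagon {a b c d e} (hab : A a b) (hbc : A b c) (hcd : A c d) (hde : A d e) : ¬A e a :=
    fun hea => hfive ![a, b, c, d, e] (by simp [IsClosedWalk, Fin.forall_fin_succ, *])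
  have reverse {u v} (huv : petersen.Adj u v) (h : ¬A u v) : A v u :=
    ((hA.1 u v).1 huv).resolve_left h
  have out u : ∃ v ∈ petersenNeighbors u, A u v :=
    (hconn.exists_out u).imp fun v h => ⟨hA.adj h, h⟩
  have inn u : ∃ v ∈ petersenNeighbors u, A v u :=
    (hconn.exists_in u).imp fun v h => ⟨(hA.adj h).symm, h⟩
  have h34 : A 3 4 := reverse (by decide) (no_pentagon h38 h85 h50 h04)
  have h49 : A 4 9 := by simpa [petersenNeighbors, hA.2 _ _ h04, hA.2 _ _ h34] using out 4
  have h68 : A 6 8 := reverse (by decide) (no_pentagon h61 h12 h23 h38)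
  have h96 : A 9 6 := by simpa [petersenNeighbors, hA.2 _ _ h61, hA.2 _ _ h68] using inn 6
  have h75 : A 7 5 := by
    refine reverse (by decide) fun h57 => ?_
    have h27 : A 2 7 := reverse (by decide) (no_pentagon h23 h38 h85 h57)
    have h79 : A 7 9 := by simpa [petersenNeighbors, hA.2 _ _ h57, hA.2 _ _ h27] using out 7
    exact no_pentagon h57 h79 h96 h68 h85
  have h72 : A 7 2 := reverse (by decide) fun h27 => no_pentagon h01 h12 h27 h75 h50
  have h97 : A 9 7 := by simpa [petersenNeighbors, hA.2 _ _ h75, hA.2 _ _ h72] using inn 7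
  exact ⟨h49, h68, h96, h75, h72, h97⟩

lemma confines_zero_of_hexagon (hA : IsOrientation petersen A) (hconn : StronglyConnected A)
    (hfive : ∀ c : Fin 5 → Fin 10, ¬IsClosedWalk A c)
    (h01 : A 0 1) (h12 : A 1 2) (h23 : A 2 3) (h38 : A 3 8) (h85 : A 8 5) (h50 : A 5 0)
    (h04 : A 0 4) (h61 : A 6 1) : Confines A {0} := by
  obtain ⟨h49, h68, h96, h75, h72, h97⟩ :=
    arcs_of_hexagon hA hconn hfive h01 h12 h23 h38 h85 h50 h04 h61
  refine hA.confines_singleton fun C c0 hout hstep => ?_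
  have c1 := hout 1 h01
  have c4 := hout 4 h04
  have c5 : 5 ∈ C := hstep 5 (by simp [petersen_adj, petersenNeighbors, c0, h75, h85])
  have c8 : 8 ∈ C := hstep 8 (by simp [petersen_adj, petersenNeighbors, h38, c5, h68])
  have c3 : 3 ∈ C := hstep 3 (by simp [petersen_adj, petersenNeighbors, h23, c4, c8])
  have c2 : 2 ∈ C := hstep 2 (by simp [petersen_adj, petersenNeighbors, h12, c3, h72])
  have c6 : 6 ∈ C := hstep 6 (by simp [petersen_adj, petersenNeighbors, c1, c8, h96])
  have c7 : 7 ∈ C := hstep 7 (by simp [petersen_adj, petersenNeighbors, c2, c5, h97])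
  have c9 : 9 ∈ C := hstep 9 (by simp [petersen_adj, petersenNeighbors, h49, c6, c7])
  simp [Fin.forall_fin_succ, *]

lemma exists_petersen_iso_of_arcs (hA : IsOrientation petersen A) {a b c d : Fin 10}
    (hab : A a b) (hbc : A b c) (hcd : A c d) :
    ∃ f : petersen ≃g petersen, f 0 = a ∧ f 1 = b ∧ f 2 = c ∧ f 3 = d :=
  exists_petersen_iso a b c d (hA.adj hab) (hA.adj hbc) (hA.adj hcd)
    (hA.ne_of_arc_arc hab hbc) (hA.ne_of_arc_arc hbc hcd)

lemma exists_confines_of_normalized_pentagon (hA : IsOrientation petersen A) {c : Fin 5 → Fin 10}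
    (hc : IsClosedWalk A c) (h0 : c 0 = 0) (h1 : c 1 = 1) (h2 : c 2 = 2) (h3 : c 3 = 3)
    (hexit : HasExit A c 0) (hexit' : ¬HasExit A c 4) : ∃ x, Confines A {x} := by
  have h01 : A 0 1 := by simpa [h0, h1] using hc 0
  have h12 : A 1 2 := by simpa [h1, h2] using hc 1
  have h23 : A 2 3 := by simpa [h2, h3] using hc 2
  have h34 : A 3 (c 4) := by simpa [h3] using hc 3
  have h40 : A (c 4) 0 := by simpa [h0] using hc 4
  have h4 : c 4 = 4 :=
    (by decide : ∀ v, petersen.Adj 3 v → petersen.Adj v 0 → v = 4) _ (hA.adj h34) (hA.adj h40)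
  rw [h4] at h34 h40
  have h05 : A 0 5 := by
    obtain ⟨v, hv, hv1⟩ : ∃ v, A 0 v ∧ v ≠ 1 := by simpa [HasExit, h0, h1] using hexit
    have := (by decide : ∀ v, petersen.Adj 0 v → v ≠ 1 → v ≠ 4 → v = 5) v (hA.adj hv) hv1
      (hA.ne_of_arc_arc h40 hv).symm
    rwa [← this]
  have h94 : A 9 4 := ((hA.1 4 9).1 (by decide)).resolve_left fun h49 =>
    hexit' ⟨9, by rwa [h4], by simp [h0]⟩
  by_cases hcycle : A 3 8 ∧ A 8 6 ∧ A 6 9 ∧ A 9 7 ∧ A 7 2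
  · obtain ⟨h38, h86, h69, h97, h72⟩ := hcycle
    exact ⟨3, confines_three_of_pentagon hA h01 h12 h34 h40 h05 h38 h86 h69 h97 h72⟩
  · exact ⟨0, confines_zero_of_pentagon hA h01 h12 h23 h34 h05 h94 hcycle⟩

lemma confines_zero_of_normalized_hexagon (hA : IsOrientation petersen A)
    (hconn : StronglyConnected A) (hfive : ∀ c : Fin 5 → Fin 10, ¬IsClosedWalk A c)
    {c : Fin 6 → Fin 10} (hc : IsClosedWalk A c)
    (h0 : c 0 = 0) (h1 : c 1 = 1) (h2 : c 2 = 2) (h3 : c 3 = 3)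
    (hexit : HasExit A c 0) (hexit' : ¬HasExit A c 1) : Confines A {0} := by
  have h01 : A 0 1 := by simpa [h0, h1] using hc 0
  have h12 : A 1 2 := by simpa [h1, h2] using hc 1
  have h23 : A 2 3 := by simpa [h2, h3] using hc 2
  have h34 : A 3 (c 4) := by simpa [h3] using hc 3
  have h45 : A (c 4) (c 5) := hc 4
  have h50 : A (c 5) 0 := by simpa [h0] using hc 5
  obtain ⟨h4, h5⟩ : c 4 = 8 ∧ c 5 = 5 :=
    (by decide : ∀ u v, petersen.Adj 3 u → petersen.Adj u v → petersen.Adj v 0 → 2 ≠ u →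
      u = 8 ∧ v = 5) _ _ (hA.adj h34) (hA.adj h45) (hA.adj h50) (hA.ne_of_arc_arc h23 h34)
  rw [h4] at h34 h45
  rw [h5] at h45 h50
  have h04 : A 0 4 := by
    obtain ⟨v, hv, hv1⟩ : ∃ v, A 0 v ∧ v ≠ 1 := by simpa [HasExit, h0, h1] using hexit
    have := (by decide : ∀ v, petersen.Adj 0 v → v ≠ 1 → v ≠ 5 → v = 4) v (hA.adj hv) hv1
      (hA.ne_of_arc_arc h50 hv).symm
    rwa [← this]
  have h61 : A 6 1 := ((hA.1 1 6).1 (by decide)).resolve_left fun h16 =>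
    hexit' ⟨6, by rwa [h1], by simp [h2]⟩
  exact confines_zero_of_hexagon hA hconn hfive h01 h12 h23 h34 h45 h50 h04 h61

lemma exists_confines_of_pentagon (hA : IsOrientation petersen A) (hconn : StronglyConnected A)
    {c : Fin 5 → Fin 10} (hc : IsClosedWalk A c) : ∃ x, Confines A {x} := by
  have hsurj : ¬Function.Surjective c := fun h =>
    absurd (Fintype.card_le_of_surjective c h) (by simp)
  obtain ⟨i, hi⟩ := exists_hasExit hconn hsurj
  obtain ⟨j, hj⟩ := exists_not_hasExit hA (fun v => (petersen_degree v).le) hconn hc hsurj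
  obtain ⟨l, hl, hl'⟩ := exists_and_not_add_one (p := fun i => ¬HasExit A c i) hj (not_not.2 hi)
  rw [not_not] at hl'
  have hc' := hc.rotate (l + 1)
  obtain ⟨f, h0, h1, h2, h3⟩ := exists_petersen_iso_of_arcs hA (hc' 0) (hc' 1) (hc' 2)
  obtain ⟨x, hx⟩ := exists_confines_of_normalized_pentagon (hA.preimage f) (hc'.preimage f.toEquiv)
    (f.symm_apply_eq.2 h0.symm) (f.symm_apply_eq.2 h1.symm) (f.symm_apply_eq.2 h2.symm)
    (f.symm_apply_eq.2 h3.symm)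
    (hasExit_preimage_iff.2 <| hasExit_rotate_iff.2 <| by rwa [add_zero])
    (mt (fun h => hasExit_rotate_iff.1 (hasExit_preimage_iff.1 h)) <| by
      rwa [add_assoc, show (1 + 4 : Fin 5) = 0 from rfl, add_zero])
  exact ⟨f x, Set.image_singleton ▸ hx.of_preimage⟩

lemma exists_confines_of_hexagon (hA : IsOrientation petersen A) (hconn : StronglyConnected A)
    (hfive : ∀ c : Fin 5 → Fin 10, ¬IsClosedWalk A c)
    {c : Fin 6 → Fin 10} (hc : IsClosedWalk A c) : ∃ x, Confines A {x} := by
  have hsurj : ¬Function.Surjective c := fun h =>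
    absurd (Fintype.card_le_of_surjective c h) (by simp)
  obtain ⟨i, hi⟩ := exists_hasExit hconn hsurj
  obtain ⟨j, hj⟩ := exists_not_hasExit hA (fun v => (petersen_degree v).le) hconn hc hsurj
  obtain ⟨l, hl, hl'⟩ := exists_and_not_add_one hi hj
  have hc' := hc.rotate l
  obtain ⟨f, h0, h1, h2, h3⟩ := exists_petersen_iso_of_arcs hA (hc' 0) (hc' 1) (hc' 2)
  have hx := confines_zero_of_normalized_hexagon (hA.preimage f) (hconn.preimage f.toEquiv)
    (fun d hd => hfive (f ∘ d) hd) (hc'.preimage f.toEquiv)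
    (f.symm_apply_eq.2 h0.symm) (f.symm_apply_eq.2 h1.symm) (f.symm_apply_eq.2 h2.symm)
    (f.symm_apply_eq.2 h3.symm)
    (hasExit_preimage_iff.2 <| hasExit_rotate_iff.2 <| by rwa [add_zero])
    (mt (fun h => hasExit_rotate_iff.1 (hasExit_preimage_iff.1 h)) hl')
  exact ⟨f 0, Set.image_singleton ▸ hx.of_preimage⟩

lemma not_isClosedWalk_seven (hA : IsOrientation petersen A) (c : Fin 7 → Fin 10) :
    ¬IsClosedWalk A c := fun hc =>
  have hne i : c (i + 2) ≠ c i := by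
    have := hA.ne_of_arc_arc (hc i) (hc (i + 1))
    rw [add_assoc] at this
    exact this.symm
  petersen_no_seven_cycle _ _ (hA.adj (hc 0)) _ (hA.adj (hc 1)) (hne 0) _ (hA.adj (hc 2)) (hne 1)
    _ (hA.adj (hc 3)) (hne 2) _ (hA.adj (hc 4)) (hne 3) (hne 5).symm _ (hA.adj (hc 5)) (hne 4)
    (hne 6).symm (hA.adj (hc 6))

lemma exists_confines_petersen (hA : IsOrientation petersen A) (hconn : StronglyConnected A) :
    ∃ x, Confines A {x} := by
  by_cases hfive : ∃ c : Fin 5 → Fin 10, IsClosedWalk A c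
  · exact hfive.elim fun c hc => exists_confines_of_pentagon hA hconn hc
  push Not at hfive
  obtain ⟨x, y, z, hyz, hxy, hxz⟩ := hA.exists_two_out (by rw [petersen_card_edgeFinset]; simp)
  by_cases hx : Confines A {x}
  · exact ⟨x, hx⟩
  obtain ⟨n, hn, c, hc⟩ := hA.exists_isClosedWalk_of_not_confines hxy hxz hyz hx
  have hn' := hc.four_le hA petersen_commonNeighbors_eq_empty petersen_commonNeighbors_subsingleton
  rw [Fintype.card_fin] at hn
  interval_cases n
  · exact absurd hc (hfive c)
  · exact exists_confines_of_hexagon hA hconn hfive hc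
  · exact absurd hc (not_isClosedWalk_seven hA c)

/-- A strongly connected orientation of the Petersen graph, given by its lists of
out-neighbours. -/
def petersenArc (u v : Fin 10) : Prop :=
  v ∈ (![[1, 5], [2, 6], [3, 7], [4], [0, 9], [7, 8], [8], [9], [3], [6]] :
    Fin 10 → List (Fin 10)) u

instance : DecidableRel petersenArc := fun _ _ => inferInstanceAs (Decidable (_ ∈ _))

lemma isOrientation_petersenArc : IsOrientation petersen petersenArc :=
  ⟨by decide +kernel, by decide +kernel⟩

lemma stronglyConnected_petersenArc : StronglyConnected petersenArc := by
  have hwalk : IsClosedWalk petersenArc ![0, 1, 2, 3, 4, 0, 5, 7, 9, 6, 8, 3, 4] := by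
    unfold IsClosedWalk
    decide
  exact hwalk.stronglyConnected (by decide)

end PetersenOrientation

/-- There is a finite simple graph `G`, admitting a strongly connected
orientation, such that every strongly connected orientation `D` of `G`
satisfies `c(D) < c(G)`. -/
theorem stmt_6 :
    ∃ (V : Type) (_ : Fintype V) (G : SimpleGraph V),
      (∃ A : V → V → Prop, IsOrientation G A ∧ StronglyConnected A) ∧
      ∀ A : V → V → Prop, IsOrientation G A → StronglyConnected A →
        copNumber A < copNumber G.Adj := by
  refine ⟨Fin 10, inferInstance, petersen,
    ⟨petersenArc, isOrientation_petersenArc, stronglyConnected_petersenArc⟩, fun A hA hconn => ?_⟩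
  obtain ⟨x, hx⟩ := exists_confines_petersen hA hconn
  have hwin : CopsWin A 2 := Confines.copsWin (x := fun _ : Fin 1 => x)
    (by rwa [Set.range_const]) hconn
  exact (copNumber_le hwin).trans_lt three_le_copNumber_petersen

end CopsRobbers
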